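/- Let h be a symmetric bilinear form on V with associated symmetric endomorphism H and let 1 ≤ p ≤ n. Every p-form ω on V satisfies Ric_{h⧆g}(ω) = −(n−2p)·Hω + p·tr(h)·ω. -/

import Mathlib

/-!
The curvature endomorphism of `h ⧆ g` is
`R(X,Y)Z = h(X,Z) Y − g(Y,Z) HX + g(X,Z) HY − h(Y,Z) X` (`curvOp_knProd`).
Write `F i = ω(X₁,…,H Xᵢ,…,X_p)`, so that `Hω = −∑ F i`. Up to the overall sign of the action,
`Ric(ω)` is a double sum over the slot `i` contracted with the basis and the slot `k` on which
`R(Xᵢ,eⱼ)` acts.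

* For `i = k` the sum over `j` gives `(2 − n) F i − tr(h) ω` (`sum_diag`).
* For `i ≠ k` the form restricts to an alternating bilinear form in the two slots; one term has a
  repeated argument, the trace term pairs a symmetric with a skew tensor, and skewness turns the
  two remaining terms into `F i + F k` (`sum_offdiag`).

Uniformly, the `(i, k)` summand is `F i + F k`, corrected by `−n F i − tr(h) ω` on the diagonal;
the total is `(2p − n) ∑ F i − p tr(h) ω`, whose negative is the claim.
-/

open scoped RealInnerProductSpace BigOperators
open Finset

noncomputable section

variable {V : Type*} [NormedAddCommGroup V] [InnerProductSpace ℝ V]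

/-- The action `(L T)(X₁,…,X_k) = −Σᵢ T(X₁,…,L(Xᵢ),…,X_k)` of a map `L : V → V`
on a `(0,k)`-tensor `T`. -/
def tact {k : ℕ} (L : V → V) (T : (Fin k → V) → ℝ) (X : Fin k → V) : ℝ :=
  -∑ i, T (Function.update X i (L (X i)))

/-- The Kulkarni–Nomizu product of two bilinear forms. -/
def knProd (s₁ s₂ : V → V → ℝ) (X Y Z W : V) : ℝ :=
  s₁ X Z * s₂ Y W - s₁ X W * s₂ Y Z + s₁ Y W * s₂ X Z - s₁ Y Z * s₂ X W

/-- The inner product `g` as a bilinear form. -/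
def gf (X Y : V) : ℝ := ⟪X, Y⟫

/-- The curvature endomorphism `R(X,Y)`, determined by `g(R(X,Y)Z,W) = R(X,Y,Z,W)`,
expressed via the orthonormal basis `e`. -/
def curvOp {n : ℕ} (e : Fin n → V) (R : V → V → V → V → ℝ) (X Y Z : V) : V :=
  ∑ a, R X Y Z (e a) • e a

/-- The curvature term `Ric_R(T)(X₁,…,X_k) = Σᵢ Σⱼ ((R(Xᵢ,eⱼ))T)(X₁,…,eⱼ,…,X_k)`. -/
def ricTerm {n k : ℕ} (e : Fin n → V) (R : V → V → V → V → ℝ)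
    (T : (Fin k → V) → ℝ) (X : Fin k → V) : ℝ :=
  ∑ i : Fin k, ∑ j : Fin n, tact (curvOp e R (X i) (e j)) T (Function.update X i (e j))

/-- The inner product of two `(0,k)`-tensors with respect to the orthonormal basis `e`. -/
def tinner {n k : ℕ} (e : Fin n → V) (S T : (Fin k → V) → ℝ) : ℝ :=
  ∑ I : Fin k → Fin n, S (fun m => e (I m)) * T (fun m => e (I m))

/-- The skew endomorphism `(A ∧ B)Z = g(A,Z)B − g(B,Z)A`. -/
def wedgeOp (A B Z : V) : V := ⟪A, Z⟫ • B - ⟪B, Z⟫ • A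

/-- The curvature endomorphism of `h ⧆ g`, without reference to a basis. -/
lemma curvOp_knProd {n : ℕ} (e : OrthonormalBasis (Fin n) ℝ V) (H : V →ₗ[ℝ] V)
    (h : V → V → ℝ) (hh : ∀ X Y : V, h X Y = ⟪H X, Y⟫) (X Y Z : V) :
    curvOp ⇑e (knProd h gf) X Y Z =
      h X Z • Y - ⟪Y, Z⟫ • H X + ⟪X, Z⟫ • H Y - h Y Z • X := by
  have expand : ∀ v : V, ∑ a, ⟪v, e a⟫ • e a = v := fun v => by
    simpa only [real_inner_comm] using e.sum_repr' v
  rw [← expand (h X Z • Y - ⟪Y, Z⟫ • H X + ⟪X, Z⟫ • H Y - h Y Z • X)]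
  refine Finset.sum_congr rfl fun a _ => ?_
  congr 1
  simp only [knProd, gf, hh, inner_add_left, inner_sub_left, real_inner_smul_left]
  ring

/-- The contribution of the slot that is contracted: the trace over `j` of `R(x, e_j) e_j`. -/
lemma sum_diag {n : ℕ} (e : OrthonormalBasis (Fin n) ℝ V) (H : V →ₗ[ℝ] V)
    (h : V → V → ℝ) (hh : ∀ X Y : V, h X Y = ⟪H X, Y⟫) (f : V →ₗ[ℝ] ℝ) (x : V) :
    ∑ j, f (curvOp ⇑e (knProd h gf) x (e j) (e j)) =
      (2 - (n : ℝ)) * f (H x) - (∑ a, h (e a) (e a)) * f x := by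
  have expand : ∀ (f : V →ₗ[ℝ] ℝ) (v : V), ∑ a, ⟪v, e a⟫ * f (e a) = f v := fun f v => by
    conv_rhs => rw [← e.sum_repr' v]
    simp [real_inner_comm]
  have h1 := expand f (H x)
  have h2 := expand (f ∘ₗ H) x
  simp only [LinearMap.comp_apply] at h2
  simp only [curvOp_knProd e H h hh, map_add, map_sub, map_smul, smul_eq_mul,
    Finset.sum_add_distrib, Finset.sum_sub_distrib, ← Finset.sum_mul, hh, h1, h2]
  simp
  ring

/-- The contribution of a pair of distinct slots, on which an alternating form restricts to an
alternating bilinear form `B`. The trace `∑ B(e_j, H e_j)` drops out because `H` is symmetric and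
`B` is skew. -/
lemma sum_offdiag {n : ℕ} (e : OrthonormalBasis (Fin n) ℝ V) (H : V →ₗ[ℝ] V)
    (hHsym : ∀ X Y : V, ⟪H X, Y⟫ = ⟪X, H Y⟫)
    (h : V → V → ℝ) (hh : ∀ X Y : V, h X Y = ⟪H X, Y⟫) (B : V →ₗ[ℝ] V →ₗ[ℝ] ℝ)
    (hB : ∀ v, B v v = 0) (x z : V) :
    ∑ j, B (e j) (curvOp ⇑e (knProd h gf) x (e j) z) = B (H x) z + B x (H z) := by
  have skew : ∀ v w, B v w = -B w v := fun v w => by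
    have := hB (v + w)
    simp only [map_add, LinearMap.add_apply, hB] at this
    linarith
  have expand : ∀ (f : V →ₗ[ℝ] ℝ) (v : V), ∑ a, ⟪e a, v⟫ * f (e a) = f v := fun f v => by
    conv_rhs => rw [← e.sum_repr' v]
    simp
  have trace_zero : ∑ j, B (e j) (H (e j)) = 0 := by
    have h1 : ∑ j, B (e j) (H (e j)) = ∑ j, ∑ a, ⟪e a, H (e j)⟫ * B (e j) (e a) :=
      Finset.sum_congr rfl fun j _ => (expand (B (e j)) (H (e j))).symm
    have h2 : ∑ j, ∑ a, ⟪e a, H (e j)⟫ * B (e j) (e a)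
        = -∑ j, ∑ a, ⟪e a, H (e j)⟫ * B (e j) (e a) := by
      conv_lhs => rw [Finset.sum_comm]
      simp only [← Finset.sum_neg_distrib]
      refine Finset.sum_congr rfl fun a _ => Finset.sum_congr rfl fun j _ => ?_
      rw [skew (e j) (e a), ← hHsym, real_inner_comm]
      ring
    linarith
  have h1 := expand (B.flip (H x)) z
  have h2 := expand (B.flip x) (H z)
  simp only [LinearMap.flip_apply] at h1 h2
  simp only [curvOp_knProd e H h hh, map_add, map_sub, map_smul, smul_eq_mul, hB, mul_zero,
    Finset.sum_add_distrib, Finset.sum_sub_distrib, ← Finset.mul_sum, trace_zero, hh, hHsym (e _),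
    h1, h2]
  rw [skew (H x) z, skew x (H z)]
  simp
  ring

/-- The bilinear form obtained from `ω` by freeing two distinct slots `i ≠ k` of `X`. -/
def twoSlot {p : ℕ} (ω : AlternatingMap ℝ V ℝ (Fin p)) (X : Fin p → V) {i k : Fin p}
    (hik : i ≠ k) : V →ₗ[ℝ] V →ₗ[ℝ] ℝ :=
  LinearMap.mk₂ ℝ (fun a b => ω (Function.update (Function.update X i a) k b))
    (fun a a' b => by
      simp only [Function.update_comm hik, ω.map_update_add])
    (fun c a b => by
      simp only [Function.update_comm hik, ω.map_update_smul])
    (fun a b b' => by simp only [ω.map_update_add])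
    (fun c a b => by simp only [ω.map_update_smul])

lemma twoSlot_self {p : ℕ} (ω : AlternatingMap ℝ V ℝ (Fin p)) (X : Fin p → V) {i k : Fin p}
    (hik : i ≠ k) (v : V) : twoSlot ω X hik v v = 0 :=
  ω.map_eq_zero_of_eq _ (by simp [hik]) hik

/-- Proposition 3.3(2), first identity: the weighted curvature term on
`p`-forms. -/
theorem stmt6 {n p : ℕ} (hp : 1 ≤ p) (hpn : p ≤ n) (e : OrthonormalBasis (Fin n) ℝ V)
    (H : V →ₗ[ℝ] V) (hHsym : ∀ X Y : V, ⟪H X, Y⟫ = ⟪X, H Y⟫)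
    (h : V → V → ℝ) (hh : ∀ X Y : V, h X Y = ⟪H X, Y⟫)
    (ω : AlternatingMap ℝ V ℝ (Fin p)) :
    ∀ X : Fin p → V,
      ricTerm ⇑e (knProd h gf) ⇑ω X =
        -((n : ℝ) - 2 * p) * tact ⇑H ⇑ω X
        + (p : ℝ) * (∑ a : Fin n, h (e a) (e a)) * ω X := by
  intro X
  set F : Fin p → ℝ := fun i => ω (Function.update X i (H (X i))) with hF
  set τ : ℝ := ∑ a : Fin n, h (e a) (e a) with hτ
  -- The `(i, k)` summand, where `i` is the contracted slot and `k` the slot acted upon.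
  have key : ∀ i k : Fin p,
      ∑ j, ω (Function.update (Function.update X i (e j)) k
        (curvOp ⇑e (knProd h gf) (X i) (e j) (Function.update X i (e j) k))) =
      F i + F k + if i = k then -(n : ℝ) * F i - τ * ω X else 0 := by
    intro i k
    by_cases hik : i = k
    · subst hik
      have := sum_diag e H h hh (ω.toMultilinearMap.toLinearMap X i) (X i)
      simp only [MultilinearMap.toLinearMap_apply, AlternatingMap.coe_multilinearMap,
        Function.update_eq_self] at this
      simp only [Function.update_idem, Function.update_self, this, if_true, hF]
      ring
    · have := sum_offdiag e H hHsym h hh (twoSlot ω X hik) (twoSlot_self ω X hik) (X i) (X k)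
      simp only [twoSlot, LinearMap.mk₂_apply, Function.update_eq_self] at this
      simp only [Function.update_of_ne (Ne.symm hik), this, if_neg hik, hF, add_zero]
      rw [Function.update_comm hik, Function.update_eq_self]
  have hsum : ricTerm ⇑e (knProd h gf) ⇑ω X = -∑ i, ∑ k, (F i + F k +
      if i = k then -(n : ℝ) * F i - τ * ω X else 0) := by
    simp only [← key, ricTerm, tact, ← Finset.sum_neg_distrib]
    exact Finset.sum_congr rfl fun i _ => Finset.sum_comm
  rw [hsum]
  simp only [tact, Finset.sum_add_distrib, Finset.sum_sub_distrib, Finset.sum_ite_eq,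
    Finset.mem_univ, if_true, Finset.sum_const, Finset.card_univ, Fintype.card_fin, nsmul_eq_mul,
    ← Finset.mul_sum]
  ring
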